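/- arXiv:2103.14565 — 8 statements merged into one kernel-verified Lean document; each statement's English description precedes it below -/
import Mathlib

section
/- Let Z be an invertible n×n real matrix with singular value decomposition Z = P G Fᵀ. Then among all n×n real matrices B̃ such that S̃ = I − B̃ᵀ B̃ is positive semidefinite, the trace tr(B̃ Z) attains its maximum value tr(G), and this maximum occurs only for B̃ = F Pᵀ; that is, tr(B̃ Z) ≤ tr(G) for every such B̃, with equality if and only if B̃ = F Pᵀ. -/
open Matrix

/-!
For a contraction `B`, isometries `P`, `F` and a positive semidefinite `G`, completing the square
in `D = B * P - F` gives
`2 * (re tr G - re tr (B * (P * G * Fᴴ))) = re tr (D * G * Dᴴ) + re tr (P * G * Pᴴ * (1 - Bᴴ * B))`.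
Both terms on the right are nonnegative, and for positive definite `G` the first one vanishes only
if `D = 0`.
-/

theorem mul_eq_iff_eq_mul_of_mul_eq_one {R m n : Type*} [Semiring R] [IsStablyFiniteRing R]
    [Fintype m] [DecidableEq m] {P Q : Matrix m m R} (hQP : Q * P = 1) {B F : Matrix n m R} :
    B * P = F ↔ B = F * Q := by
  have hPQ : P * Q = 1 := mul_eq_one_comm.mp hQP
  constructor
  · rintro rfl
    rw [Matrix.mul_assoc, hPQ, Matrix.mul_one]
  · rintro rfl
    rw [Matrix.mul_assoc, hQP, Matrix.mul_one]

section

open scoped ComplexOrder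

variable {𝕜 k m n : Type*} [RCLike 𝕜] [Fintype k] [Fintype m] [Fintype n]

open scoped MatrixOrder in
theorem exists_eq_conjTranspose_mul_self_of_posSemidef {A : Matrix n n 𝕜} (hA : A.PosSemidef) :
    ∃ C : Matrix n n 𝕜, A = Cᴴ * C := by
  classical exact CStarAlgebra.nonneg_iff_eq_star_mul_self.mp hA.nonneg

theorem trace_mul_nonneg_of_posSemidef {A B : Matrix n n 𝕜} (hA : A.PosSemidef)
    (hB : B.PosSemidef) : 0 ≤ (A * B).trace := by
  obtain ⟨C, rfl⟩ := exists_eq_conjTranspose_mul_self_of_posSemidef hA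
  rw [← trace_mul_cycle]
  exact (hB.mul_mul_conjTranspose_same C).trace_nonneg

theorem trace_mul_mul_conjTranspose_eq_zero_iff_of_posDef {A : Matrix n n 𝕜} (hA : A.PosDef)
    {D : Matrix m n 𝕜} : (D * A * Dᴴ).trace = 0 ↔ D = 0 := by
  classical
  refine ⟨fun h ↦ ?_, fun h ↦ by simp [h]⟩
  obtain ⟨C, rfl⟩ := exists_eq_conjTranspose_mul_self_of_posSemidef hA.posSemidef
  have hD : D * (Cᴴ * C) = 0 := by
    rw [mul_conjTranspose_mul_self_eq_zero, ← trace_mul_conjTranspose_self_eq_zero_iff]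
    simpa [Matrix.mul_assoc] using h
  have hdet : IsUnit (Cᴴ * C).det := (isUnit_iff_isUnit_det _).mp hA.isUnit
  rw [← mul_nonsing_inv_cancel_right _ D hdet, hD, Matrix.zero_mul]

variable [DecidableEq k]

theorem trace_mul_mul_conjTranspose_of_conjTranspose_mul_eq_one {P : Matrix m k 𝕜}
    (hP : Pᴴ * P = 1) (G : Matrix k k 𝕜) : (P * G * Pᴴ).trace = G.trace := by
  rw [trace_mul_cycle, hP, Matrix.one_mul]

variable [DecidableEq m] {P : Matrix m k 𝕜} {F : Matrix n k 𝕜} {G : Matrix k k 𝕜}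

theorem posSemidef_one_sub_mul_conjTranspose_of_conjTranspose_mul_eq_one (hP : Pᴴ * P = 1) :
    (1 - P * Pᴴ).PosSemidef := by
  have hproj : P * Pᴴ * (P * Pᴴ) = P * Pᴴ := by
    rw [Matrix.mul_assoc, ← Matrix.mul_assoc Pᴴ, hP, Matrix.one_mul]
  have hcompl : (1 - P * Pᴴ)ᴴ * (1 - P * Pᴴ) = 1 - P * Pᴴ := by
    simp [Matrix.mul_sub, Matrix.sub_mul, hproj]
  exact hcompl ▸ posSemidef_conjTranspose_mul_self _

theorem two_mul_re_trace_sub_re_trace_mul (hP : Pᴴ * P = 1) (hF : Fᴴ * F = 1)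
    (hG : G.IsHermitian) (B : Matrix n m 𝕜) :
    2 * (RCLike.re G.trace - RCLike.re (B * (P * G * Fᴴ)).trace) =
      RCLike.re ((B * P - F) * G * (B * P - F)ᴴ).trace +
        RCLike.re (P * G * Pᴴ * (1 - Bᴴ * B)).trace := by
  have hcross : RCLike.re (F * G * (B * P)ᴴ).trace = RCLike.re (B * P * G * Fᴴ).trace := by
    have hadjoint : F * G * (B * P)ᴴ = (B * P * G * Fᴴ)ᴴ := by
      simp only [conjTranspose_mul, conjTranspose_conjTranspose, hG.eq, Matrix.mul_assoc]
    rw [hadjoint, trace_conjTranspose, RCLike.star_def, RCLike.conj_re]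
  have hquad : (P * G * Pᴴ * (Bᴴ * B)).trace = (B * P * G * (B * P)ᴴ).trace := by
    rw [← Matrix.mul_assoc, trace_mul_comm]
    simp only [conjTranspose_mul, Matrix.mul_assoc]
  have hPG := trace_mul_mul_conjTranspose_of_conjTranspose_mul_eq_one hP G
  have hFG := trace_mul_mul_conjTranspose_of_conjTranspose_mul_eq_one hF G
  simp only [conjTranspose_sub, Matrix.sub_mul, Matrix.mul_sub, trace_sub, map_sub, Matrix.mul_one,
    hcross, hquad, hPG, hFG, ← Matrix.mul_assoc B]
  ring

theorem re_trace_sub_mul_mul_conjTranspose_le (hP : Pᴴ * P = 1) (hF : Fᴴ * F = 1)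
    (hG : G.PosSemidef) {B : Matrix n m 𝕜} (hB : (1 - Bᴴ * B).PosSemidef) :
    RCLike.re ((B * P - F) * G * (B * P - F)ᴴ).trace ≤
      2 * (RCLike.re G.trace - RCLike.re (B * (P * G * Fᴴ)).trace) := by
  have hdefect : 0 ≤ RCLike.re (P * G * Pᴴ * (1 - Bᴴ * B)).trace :=
    (RCLike.nonneg_iff.mp
      (trace_mul_nonneg_of_posSemidef (hG.mul_mul_conjTranspose_same P) hB)).1
  rw [two_mul_re_trace_sub_re_trace_mul hP hF hG.isHermitian]
  exact le_add_of_nonneg_right hdefect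

theorem re_trace_mul_le_of_posSemidef (hP : Pᴴ * P = 1) (hF : Fᴴ * F = 1)
    (hG : G.PosSemidef) {B : Matrix n m 𝕜} (hB : (1 - Bᴴ * B).PosSemidef) :
    RCLike.re (B * (P * G * Fᴴ)).trace ≤ RCLike.re G.trace := by
  have hsq := (RCLike.nonneg_iff.mp
    (hG.mul_mul_conjTranspose_same (B * P - F)).trace_nonneg).1
  linarith [re_trace_sub_mul_mul_conjTranspose_le hP hF hG hB]

theorem re_trace_mul_eq_iff_of_posDef (hP : Pᴴ * P = 1) (hF : Fᴴ * F = 1)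
    (hG : G.PosDef) {B : Matrix n m 𝕜} (hB : (1 - Bᴴ * B).PosSemidef) :
    RCLike.re (B * (P * G * Fᴴ)).trace = RCLike.re G.trace ↔ B * P = F := by
  constructor
  · intro htrace
    have hsq := hG.posSemidef.mul_mul_conjTranspose_same (B * P - F) |>.trace_nonneg
    have hsq_le := re_trace_sub_mul_mul_conjTranspose_le hP hF hG.posSemidef hB
    rw [htrace, sub_self, mul_zero] at hsq_le
    obtain ⟨hre, him⟩ := RCLike.nonneg_iff.mp hsq
    have hzero : ((B * P - F) * G * (B * P - F)ᴴ).trace = 0 :=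
      RCLike.ext (by simpa using hsq_le.antisymm hre) (by simpa using him)
    exact sub_eq_zero.mp ((trace_mul_mul_conjTranspose_eq_zero_iff_of_posDef hG).mp hzero)
  · intro hBP
    rw [← Matrix.mul_assoc, ← Matrix.mul_assoc, hBP,
      trace_mul_mul_conjTranspose_of_conjTranspose_mul_eq_one hF]

/-- With `G` diagonal, `P * G * Fᴴ` is the compact singular value decomposition, so `Z` may be
rectangular and rank-deficient. -/
theorem stmt_0_general {Z : Matrix m n 𝕜} (hP : Pᴴ * P = 1) (hF : Fᴴ * F = 1) (hG : G.PosDef)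
    (hZ : Z = P * G * Fᴴ) :
    ((1 - (F * Pᴴ)ᴴ * (F * Pᴴ)).PosSemidef ∧ (F * Pᴴ * Z).trace = G.trace) ∧
    ∀ B : Matrix n m 𝕜, (1 - Bᴴ * B).PosSemidef →
      RCLike.re (B * Z).trace ≤ RCLike.re G.trace ∧
        (RCLike.re (B * Z).trace = RCLike.re G.trace ↔ B * P = F) := by
  subst hZ
  have hgram : (F * Pᴴ)ᴴ * (F * Pᴴ) = P * Pᴴ := by
    rw [conjTranspose_mul, conjTranspose_conjTranspose, Matrix.mul_assoc, ← Matrix.mul_assoc Fᴴ,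
      hF, Matrix.one_mul]
  have hprod : F * Pᴴ * (P * G * Fᴴ) = F * G * Fᴴ := by
    rw [Matrix.mul_assoc P, Matrix.mul_assoc F, ← Matrix.mul_assoc Pᴴ, hP, Matrix.one_mul,
      Matrix.mul_assoc]
  refine ⟨⟨?_, ?_⟩, fun B hB ↦ ⟨re_trace_mul_le_of_posSemidef hP hF hG.posSemidef hB,
    re_trace_mul_eq_iff_of_posDef hP hF hG hB⟩⟩
  · exact hgram ▸ posSemidef_one_sub_mul_conjTranspose_of_conjTranspose_mul_eq_one hP
  · rw [hprod, trace_mul_mul_conjTranspose_of_conjTranspose_mul_eq_one hF]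

end

/-- Let `Z` be an invertible `n×n` real matrix with singular value
decomposition `Z = P * G * Fᵀ` (with `P`, `F` orthogonal and `G` diagonal with
strictly positive diagonal entries). Then among all matrices `B` with
`1 - Bᵀ * B` positive semidefinite, `trace (B * Z)` attains its maximum value
`trace G`, and the maximum occurs only for `B = F * Pᵀ`. -/
theorem stmt_0 (n : ℕ) (Z P F G : Matrix (Fin n) (Fin n) ℝ)
    (hZ : IsUnit Z)
    (hP : Pᵀ * P = 1) (hF : Fᵀ * F = 1)
    (g : Fin n → ℝ) (hg : ∀ i, 0 < g i) (hG : G = Matrix.diagonal g)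
    (hSVD : Z = P * G * Fᵀ) :
    ((1 - (F * Pᵀ)ᵀ * (F * Pᵀ)).PosSemidef ∧ ((F * Pᵀ) * Z).trace = G.trace) ∧
    ∀ B : Matrix (Fin n) (Fin n) ℝ, (1 - Bᵀ * B).PosSemidef →
      (B * Z).trace ≤ G.trace ∧ ((B * Z).trace = G.trace ↔ B = F * Pᵀ) := by
  have hGpos : G.PosDef := hG ▸ PosDef.diagonal hg
  rw [← conjTranspose_eq_transpose_of_trivial] at hP hF hSVD
  simpa only [conjTranspose_eq_transpose_of_trivial, RCLike.re_to_real,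
    mul_eq_iff_eq_mul_of_mul_eq_one hP] using stmt_0_general hP hF hGpos hSVD
end

section
/- Let Z be an invertible n×n real matrix with singular value decomposition Z = P G Fᵀ. Then for every n×n real matrix B̃ such that I − B̃ᵀ B̃ is positive semidefinite, tr(B̃ Z) ≤ tr(G). -/
open Matrix

/-!
In the ℓ² operator norm the factors `P` and `F` have norm at most `1`, so cyclicity of the trace
turns `tr (B P G Fᴴ)` into `tr (C G)` with `‖C‖ ≤ ‖B‖ ≤ 1` for `C = Fᴴ B P`. As `G` is diagonal,
only the diagonal entries of `C` contribute, and each of them is bounded by `‖C‖`.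
-/

section

open scoped ComplexOrder Matrix.Norms.L2Operator

variable {𝕜 m n k : Type*} [RCLike 𝕜] [Fintype m] [Fintype n] [Fintype k]

lemma re_star_dotProduct_self_eq_norm_sq (x : n → 𝕜) :
    RCLike.re (star x ⬝ᵥ x) = ‖WithLp.toLp 2 x‖ ^ 2 := by
  rw [dotProduct_comm, ← EuclideanSpace.inner_toLp_toLp, inner_self_eq_norm_sq]

lemma norm_toLp_mulVec_le_of_posSemidef_one_sub [DecidableEq n] {A : Matrix m n 𝕜}
    (hA : (1 - Aᴴ * A).PosSemidef) (x : n → 𝕜) :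
    ‖WithLp.toLp 2 (A *ᵥ x)‖ ≤ ‖WithLp.toLp 2 x‖ := by
  have expand : star x ⬝ᵥ ((1 - Aᴴ * A) *ᵥ x) = star x ⬝ᵥ x - star (A *ᵥ x) ⬝ᵥ (A *ᵥ x) := by
    rw [sub_mulVec, one_mulVec, dotProduct_sub, ← mulVec_mulVec, star_mulVec, dotProduct_mulVec]
  have gap_nonneg := hA.re_dotProduct_nonneg x
  rw [expand, map_sub, re_star_dotProduct_self_eq_norm_sq, re_star_dotProduct_self_eq_norm_sq,
    sub_nonneg] at gap_nonneg
  exact le_of_sq_le_sq gap_nonneg (norm_nonneg _)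

lemma l2_opNorm_le_one_of_posSemidef_one_sub [DecidableEq n] {A : Matrix m n 𝕜}
    (hA : (1 - Aᴴ * A).PosSemidef) : ‖A‖ ≤ 1 :=
  ContinuousLinearMap.opNorm_le_bound _ zero_le_one fun x ↦
    (norm_toLp_mulVec_le_of_posSemidef_one_sub hA x.ofLp).trans_eq (one_mul _).symm

lemma l2_opNorm_le_one_of_conjTranspose_mul_self_eq_one [DecidableEq n] {A : Matrix m n 𝕜}
    (hA : Aᴴ * A = 1) : ‖A‖ ≤ 1 :=
  l2_opNorm_le_one_of_posSemidef_one_sub <| by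
    rw [hA, sub_self]
    exact .zero

lemma norm_apply_le_l2_opNorm [DecidableEq n] (A : Matrix m n 𝕜) (i : m) (j : n) :
    ‖A i j‖ ≤ ‖A‖ :=
  calc ‖A i j‖ = ‖WithLp.toLp 2 (A *ᵥ Pi.single j 1) i‖ := by simp
    _ ≤ ‖WithLp.toLp 2 (A *ᵥ Pi.single j 1)‖ := PiLp.norm_apply_le _ i
    _ ≤ ‖A‖ * ‖EuclideanSpace.single j (1 : 𝕜)‖ := A.l2_opNorm_mulVec (EuclideanSpace.single j 1)
    _ = ‖A‖ := by simp

lemma norm_trace_mul_diagonal_le [DecidableEq k] (C : Matrix k k 𝕜) (d : k → 𝕜) :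
    ‖(C * diagonal d).trace‖ ≤ ‖C‖ * ∑ i, ‖d i‖ :=
  calc ‖(C * diagonal d).trace‖ = ‖∑ i, C i i * d i‖ := by simp [trace]
    _ ≤ ∑ i, ‖C i i‖ * ‖d i‖ := by simpa using norm_sum_le Finset.univ fun i ↦ C i i * d i
    _ ≤ ∑ i, ‖C‖ * ‖d i‖ := by gcongr; exact norm_apply_le_l2_opNorm C _ _
    _ = ‖C‖ * ∑ i, ‖d i‖ := (Finset.mul_sum ..).symm

lemma l2_opNorm_conjTranspose_mul_mul_le [DecidableEq m] [DecidableEq k]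
    {P : Matrix m k 𝕜} {F : Matrix n k 𝕜} (hP : Pᴴ * P = 1) (hF : Fᴴ * F = 1)
    (B : Matrix n m 𝕜) : ‖Fᴴ * B * P‖ ≤ ‖B‖ := by
  classical
  calc ‖Fᴴ * B * P‖ ≤ ‖Fᴴ‖ * ‖B‖ * ‖P‖ := by grw [l2_opNorm_mul, l2_opNorm_mul]
    _ ≤ 1 * ‖B‖ * 1 := by
        grw [l2_opNorm_conjTranspose, l2_opNorm_le_one_of_conjTranspose_mul_self_eq_one hF,
          l2_opNorm_le_one_of_conjTranspose_mul_self_eq_one hP]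
    _ = ‖B‖ := by ring

theorem norm_trace_mul_mul_diagonal_mul_conjTranspose_le [DecidableEq m] [DecidableEq k]
    {P : Matrix m k 𝕜} {F : Matrix n k 𝕜} (hP : Pᴴ * P = 1) (hF : Fᴴ * F = 1)
    (d : k → 𝕜) (B : Matrix n m 𝕜) :
    ‖(B * (P * diagonal d * Fᴴ)).trace‖ ≤ ‖B‖ * ∑ i, ‖d i‖ :=
  calc ‖(B * (P * diagonal d * Fᴴ)).trace‖ = ‖(Fᴴ * B * P * diagonal d).trace‖ := by
        rw [← Matrix.mul_assoc, trace_mul_comm]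
        simp only [Matrix.mul_assoc]
    _ ≤ ‖Fᴴ * B * P‖ * ∑ i, ‖d i‖ := norm_trace_mul_diagonal_le _ d
    _ ≤ ‖B‖ * ∑ i, ‖d i‖ := by grw [l2_opNorm_conjTranspose_mul_mul_le hP hF B]

theorem stmt_1_general [DecidableEq m] [DecidableEq k]
    {P : Matrix m k 𝕜} {F : Matrix n k 𝕜} (hP : Pᴴ * P = 1) (hF : Fᴴ * F = 1)
    (d : k → 𝕜) {B : Matrix n m 𝕜} (hB : (1 - Bᴴ * B).PosSemidef) :
    ‖(B * (P * diagonal d * Fᴴ)).trace‖ ≤ ∑ i, ‖d i‖ := by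
  grw [norm_trace_mul_mul_diagonal_mul_conjTranspose_le hP hF,
    l2_opNorm_le_one_of_posSemidef_one_sub hB, one_mul]

end

/-- Let `Z` be an invertible `n×n` real matrix with singular value
decomposition `Z = P * G * Fᵀ`. Then for every `n×n` real matrix `B` such that
`1 - Bᵀ * B` is positive semidefinite, `trace (B * Z) ≤ trace G`. -/
theorem stmt_1 (n : ℕ) (Z P F G : Matrix (Fin n) (Fin n) ℝ)
    (hZ : IsUnit Z)
    (hP : Pᵀ * P = 1) (hF : Fᵀ * F = 1)
    (g : Fin n → ℝ) (hg : ∀ i, 0 < g i) (hG : G = Matrix.diagonal g)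
    (hSVD : Z = P * G * Fᵀ) :
    ∀ B : Matrix (Fin n) (Fin n) ℝ, (1 - Bᵀ * B).PosSemidef →
      (B * Z).trace ≤ G.trace := by
  intro B hB
  subst hSVD hG
  simpa [abs_of_pos (hg _)] using (le_abs_self _).trans (stmt_1_general hP hF g hB)
end

section
/- Let Z = P G Fᵀ with P, F orthogonal n×n matrices and G diagonal. Then for every n×n real matrix B̃, writing S̃ = I − B̃ᵀ B̃, one has tr(B̃ Z)² ≤ (tr(G) − tr(P G Pᵀ S̃)) · tr(G). -/
open Matrix

/-!
A positive semidefinite `G` makes `⟨X, Y⟩ = tr (X G Yᴴ)` a semi-inner product on rectangular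
matrices. Since `tr (B P G Fᴴ) = ⟨B P, F⟩`, `tr G - tr (P G Pᴴ (1 - Bᴴ B)) = ⟨B P, B P⟩` and
`tr G = ⟨F, F⟩`, the theorem is the Cauchy–Schwarz inequality for the pair `B P`, `F`.
-/

section

open RCLike
open scoped ComplexOrder MatrixOrder

variable {R 𝕜 k m n : Type*} [CommRing R] [StarRing R] [RCLike 𝕜]
  [Fintype k] [Fintype m] [Fintype n]

theorem norm_trace_conjTranspose_mul_sq_le (X Y : Matrix m n 𝕜) :
    ‖(Xᴴ * Y).trace‖ ^ 2 ≤ re (Xᴴ * X).trace * re (Yᴴ * Y).trace := by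
  have inner_vec (U V : Matrix m n 𝕜) :
      inner 𝕜 (WithLp.toLp 2 (vec U)) (WithLp.toLp 2 (vec V)) = (Uᴴ * V).trace := by
    rw [EuclideanSpace.inner_toLp_toLp, dotProduct_comm, star_vec_dotProduct_vec]
  have cauchy_schwarz :=
    inner_mul_inner_self_le (𝕜 := 𝕜) (WithLp.toLp 2 (vec X)) (WithLp.toLp 2 (vec Y))
  rwa [norm_inner_symm (WithLp.toLp 2 (vec Y)), ← sq, inner_vec, inner_vec, inner_vec]
    at cauchy_schwarz

theorem norm_trace_mul_mul_conjTranspose_sq_le {G : Matrix n n 𝕜} (hG : G.PosSemidef)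
    (X Y : Matrix m n 𝕜) :
    ‖(X * G * Yᴴ).trace‖ ^ 2 ≤ re (X * G * Xᴴ).trace * re (Y * G * Yᴴ).trace := by
  classical
  obtain ⟨L, rfl⟩ := CStarAlgebra.nonneg_iff_eq_star_mul_self.mp hG.nonneg
  have factor (U V : Matrix m n 𝕜) : U * (star L * L) * Vᴴ = (L * Uᴴ)ᴴ * (L * Vᴴ) := by
    simp only [star_eq_conjTranspose, conjTranspose_mul, conjTranspose_conjTranspose,
      Matrix.mul_assoc]
  simpa only [factor] using norm_trace_conjTranspose_mul_sq_le (L * Xᴴ) (L * Yᴴ)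

theorem trace_mul_mul_conjTranspose_of_conjTranspose_mul_self_eq_one [DecidableEq n]
    {P : Matrix m n R} (hP : Pᴴ * P = 1) (G : Matrix n n R) :
    (P * G * Pᴴ).trace = G.trace := by
  rw [trace_mul_cycle, hP, Matrix.one_mul]

theorem trace_sub_trace_mul_one_sub_conjTranspose_mul_self [DecidableEq m] [DecidableEq n]
    {P : Matrix m n R} (hP : Pᴴ * P = 1) (G : Matrix n n R) (B : Matrix k m R) :
    G.trace - (P * G * Pᴴ * (1 - Bᴴ * B)).trace = (B * P * G * (B * P)ᴴ).trace := by
  have cycle : (P * G * Pᴴ * (Bᴴ * B)).trace = (B * P * G * (B * P)ᴴ).trace := by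
    rw [← Matrix.mul_assoc, trace_mul_comm]
    simp only [conjTranspose_mul, Matrix.mul_assoc]
  rw [Matrix.mul_sub, Matrix.mul_one, trace_sub,
    trace_mul_mul_conjTranspose_of_conjTranspose_mul_self_eq_one hP, sub_sub_cancel, cycle]

theorem stmt_2_general [DecidableEq m] [DecidableEq n] {P : Matrix m n 𝕜} {F : Matrix k n 𝕜}
    {G : Matrix n n 𝕜} (hP : Pᴴ * P = 1) (hF : Fᴴ * F = 1) (hG : G.PosSemidef)
    (B : Matrix k m 𝕜) :
    ‖(B * (P * G * Fᴴ)).trace‖ ^ 2 ≤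
      re (G.trace - (P * G * Pᴴ * (1 - Bᴴ * B)).trace) * re G.trace :=
  calc
    ‖(B * (P * G * Fᴴ)).trace‖ ^ 2 = ‖(B * P * G * Fᴴ).trace‖ ^ 2 := by
      simp only [Matrix.mul_assoc]
    _ ≤ re (B * P * G * (B * P)ᴴ).trace * re (F * G * Fᴴ).trace :=
      norm_trace_mul_mul_conjTranspose_sq_le hG (B * P) F
    _ = re (G.trace - (P * G * Pᴴ * (1 - Bᴴ * B)).trace) * re G.trace := by
      rw [trace_sub_trace_mul_one_sub_conjTranspose_mul_self hP,
        trace_mul_mul_conjTranspose_of_conjTranspose_mul_self_eq_one hF]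

end

/-- Let `Z = P * G * Fᵀ` with `P`, `F` orthogonal and `G` diagonal
(with strictly positive diagonal entries). Then for every matrix `B`, writing
`S̃ = 1 - Bᵀ * B`, one has
`trace (B * Z) ^ 2 ≤ (trace G - trace (P * G * Pᵀ * S̃)) * trace G`. -/
theorem stmt_2 (n : ℕ) (Z P F G : Matrix (Fin n) (Fin n) ℝ)
    (hP : Pᵀ * P = 1) (hF : Fᵀ * F = 1)
    (g : Fin n → ℝ) (hg : ∀ i, 0 < g i) (hG : G = Matrix.diagonal g)
    (hSVD : Z = P * G * Fᵀ) :
    ∀ B : Matrix (Fin n) (Fin n) ℝ,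
      (B * Z).trace ^ 2 ≤
        (G.trace - (P * G * Pᵀ * (1 - Bᵀ * B)).trace) * G.trace := by
  have hG_psd : G.PosSemidef := hG ▸ PosSemidef.diagonal fun i ↦ (hg i).le
  simpa [hSVD] using stmt_2_general hP hF hG_psd
end

section
/- Let Z be an invertible n×n real matrix with singular value decomposition Z = P G Fᵀ, and let B̃ be an n×n real matrix such that S̃ = I − B̃ᵀ B̃ is positive semidefinite and S̃ ≠ 0. Then |tr(B̃ Z)| ≤ √((tr(G) − tr(P G Pᵀ S̃)) · tr(G)) < tr(G); in particular the maximum of tr(B̃ Z) over the positive semidefinite constraint cannot be attained at any B̃ with I − B̃ᵀ B̃ ≠ 0. -/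
open Matrix

/-!
Put `H = P G Pᴴ` and `W = P Fᴴ`, so that `Z = H W` with `H` positive definite and `W Wᴴ = 1`.
Then `tr (B Z) = tr (B H W)` is the inner product of `Wᴴ` and `B` for the form
`⟪X, Y⟫ = tr (Y H Xᴴ)`, and Cauchy–Schwarz bounds it by the square root of
`tr (B H Bᴴ) * tr (Wᴴ H W) = (tr H - tr (H S)) * tr H`, where `S = 1 - Bᴴ B`. The bound is strict
because `tr (H S) > 0`: with `H = Uᴴ U` and `U` invertible, `tr (H S)` is the trace of the nonzero
positive semidefinite matrix `U S Uᴴ`.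
-/

section

open scoped ComplexOrder
open RCLike (re)

variable {𝕜 m n : Type*} [RCLike 𝕜] [Fintype m] [Fintype n]

/-- The semi-inner product `⟪X, Y⟫ = tr (Y M Xᴴ)` on rectangular matrices, weighted by a positive
semidefinite matrix `M`. It extends `Matrix.toMatrixInnerProductSpace`, which covers square
matrices, with the same order of factors. -/
abbrev weightedTraceInnerCore (m : Type*) [Fintype m] {M : Matrix n n 𝕜} (hM : M.PosSemidef) :
    PreInnerProductSpace.Core 𝕜 (Matrix m n 𝕜) where
  inner X Y := (Y * M * Xᴴ).trace
  conj_inner_symm X Y := by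
    simp only [starRingEnd_apply, ← trace_conjTranspose, conjTranspose_mul,
      conjTranspose_conjTranspose, hM.isHermitian.eq, Matrix.mul_assoc]
  re_inner_nonneg X := (RCLike.nonneg_iff.mp (hM.mul_mul_conjTranspose_same X).trace_nonneg).1
  add_left _ _ _ := by simp [Matrix.mul_add]
  smul_left _ _ _ := by simp

theorem norm_trace_mul_mul_conjTranspose_le {M : Matrix n n 𝕜} (hM : M.PosSemidef)
    (X Y : Matrix m n 𝕜) :
    ‖(Y * M * Xᴴ).trace‖ ≤ √(re (X * M * Xᴴ).trace) * √(re (Y * M * Yᴴ).trace) :=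
  InnerProductSpace.Core.norm_inner_le_norm (c := weightedTraceInnerCore m hM) X Y

open scoped MatrixOrder in
theorem trace_mul_pos_of_posDef_of_posSemidef {H S : Matrix n n 𝕜}
    (hH : H.PosDef) (hS : S.PosSemidef) (hS₀ : S ≠ 0) : 0 < (H * S).trace := by
  classical
  obtain ⟨U, hU, rfl⟩ :=
    CStarAlgebra.isStrictlyPositive_iff_eq_star_mul_self.mp hH.isStrictlyPositive
  have hUSU : (U * S * Uᴴ).PosSemidef := hS.mul_mul_conjTranspose_same U
  have hUSU₀ : U * S * Uᴴ ≠ 0 := by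
    rwa [Ne, ← star_eq_conjTranspose, hU.star.mul_left_eq_zero, hU.mul_right_eq_zero]
  rw [star_eq_conjTranspose, ← trace_mul_cycle]
  exact hUSU.trace_nonneg.lt_of_ne' (hUSU.trace_eq_zero_iff.not.mpr hUSU₀)

theorem sqrt_trace_sub_trace_mul_lt_trace {H S : Matrix n n 𝕜} (hH : H.PosDef)
    (hS : S.PosSemidef) (hS₀ : S ≠ 0) :
    √((re H.trace - re (H * S).trace) * re H.trace) < re H.trace := by
  have hHS : 0 < re (H * S).trace :=
    (RCLike.pos_iff.mp (trace_mul_pos_of_posDef_of_posSemidef hH hS hS₀)).1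
  have : Nonempty n := not_isEmpty_iff.mp fun _ ↦ hS₀ (Subsingleton.elim _ _)
  have hH_pos : 0 < re H.trace := (RCLike.pos_iff.mp hH.trace_pos).1
  rw [Real.sqrt_lt' hH_pos, sq]
  gcongr
  linarith

variable [DecidableEq n]

theorem trace_sub_trace_mul_one_sub {R : Type*} [CommRing R] (H : Matrix n n R)
    (B : Matrix m n R) (C : Matrix n m R) :
    H.trace - (H * (1 - C * B)).trace = (B * H * C).trace := by
  rw [Matrix.mul_sub, Matrix.mul_one, trace_sub, sub_sub_cancel, trace_mul_cycle, trace_mul_comm]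

theorem norm_trace_mul_mul_coisometry_le {H : Matrix n n 𝕜} (hH : H.PosSemidef)
    {W : Matrix n m 𝕜} (hW : W * Wᴴ = 1) (B : Matrix m n 𝕜) :
    ‖(B * H * W).trace‖ ≤
      √((re H.trace - re (H * (1 - Bᴴ * B)).trace) * re H.trace) := by
  have hWHW : (Wᴴ * H * W).trace = H.trace := by
    rw [trace_mul_cycle, hW, Matrix.one_mul]
  have hH_nonneg : 0 ≤ re H.trace := (RCLike.nonneg_iff.mp hH.trace_nonneg).1
  rw [mul_comm, Real.sqrt_mul hH_nonneg, ← map_sub, trace_sub_trace_mul_one_sub, ← hWHW]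
  simpa only [conjTranspose_conjTranspose] using norm_trace_mul_mul_conjTranspose_le hH Wᴴ B

theorem stmt_4_general {Z : Matrix n m 𝕜} {P G : Matrix n n 𝕜} {F B : Matrix m n 𝕜}
    (hP : Pᴴ * P = 1) (hF : Fᴴ * F = 1) (hG : G.PosDef) (hZ : Z = P * G * Fᴴ)
    (hS : (1 - Bᴴ * B).PosSemidef) (hS₀ : 1 - Bᴴ * B ≠ 0) :
    ‖(B * Z).trace‖ ≤
        √((re G.trace - re (P * G * Pᴴ * (1 - Bᴴ * B)).trace) * re G.trace) ∧
      √((re G.trace - re (P * G * Pᴴ * (1 - Bᴴ * B)).trace) * re G.trace) < re G.trace := by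
  have hP' : P * Pᴴ = 1 := mul_eq_one_comm.mp hP
  have hH : (P * G * Pᴴ).PosDef :=
    (IsUnit.of_mul_eq_one _ hP').posDef_star_right_conjugate_iff.mpr hG
  have hH_trace : (P * G * Pᴴ).trace = G.trace := by
    rw [trace_mul_cycle, hP, Matrix.one_mul]
  have hW : P * Fᴴ * (P * Fᴴ)ᴴ = 1 := by
    rw [conjTranspose_mul, conjTranspose_conjTranspose, Matrix.mul_assoc, ← Matrix.mul_assoc Fᴴ,
      hF, Matrix.one_mul, hP']
  have hBZ : B * Z = B * (P * G * Pᴴ) * (P * Fᴴ) := by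
    rw [hZ, Matrix.mul_assoc B, Matrix.mul_assoc (P * G), ← Matrix.mul_assoc Pᴴ, hP,
      Matrix.one_mul]
  rw [hBZ, ← hH_trace]
  exact ⟨norm_trace_mul_mul_coisometry_le hH.posSemidef hW B,
    sqrt_trace_sub_trace_mul_lt_trace hH hS hS₀⟩

end

/-- Let `Z` be an invertible `n×n` real matrix with singular value
decomposition `Z = P * G * Fᵀ`, and let `B` be an `n×n` real matrix such that
`S̃ = 1 - Bᵀ * B` is positive semidefinite and nonzero. Then
`|trace (B * Z)| ≤ √((trace G - trace (P * G * Pᵀ * S̃)) * trace G) < trace G`. -/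
theorem stmt_4 (n : ℕ) (Z P F G B : Matrix (Fin n) (Fin n) ℝ)
    (hZ : IsUnit Z)
    (hP : Pᵀ * P = 1) (hF : Fᵀ * F = 1)
    (g : Fin n → ℝ) (hg : ∀ i, 0 < g i) (hG : G = Matrix.diagonal g)
    (hSVD : Z = P * G * Fᵀ)
    (hpsd : (1 - Bᵀ * B).PosSemidef) (hne : (1 - Bᵀ * B) ≠ 0) :
    |(B * Z).trace| ≤
        Real.sqrt ((G.trace - (P * G * Pᵀ * (1 - Bᵀ * B)).trace) * G.trace) ∧
      Real.sqrt ((G.trace - (P * G * Pᵀ * (1 - Bᵀ * B)).trace) * G.trace) <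
        G.trace := by
  subst hG
  simpa only [conjTranspose_eq_transpose_of_trivial, Real.norm_eq_abs, RCLike.re_to_real] using
    stmt_4_general hP hF (posDef_diagonal_iff.mpr hg) hSVD hpsd hne
end

section
/- Let Q, R, H and K be as in the Kalman gain setup. Then (I − K H) Q Hᵀ = K R. -/
open Matrix

theorem posDef_mul_mul_conjTranspose_add {m n α : Type*} [Finite m] [Fintype n] [Ring α]
    [PartialOrder α] [StarRing α] [AddLeftMono α] {Q : Matrix n n α} {R : Matrix m m α}
    (hQ : Q.PosSemidef) (hR : R.PosDef) (H : Matrix m n α) :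
    (H * Q * Hᴴ + R).PosDef :=
  .posSemidef_add (hQ.mul_mul_conjTranspose_same H) hR

section

variable {l m n α : Type*} [Fintype m] [Fintype n] [DecidableEq n]

theorem one_sub_mul_mul_eq_mul_iff [Ring α] (K : Matrix n m α) (H : Matrix m n α)
    (P : Matrix n l α) (R : Matrix m l α) :
    (1 - K * H) * P = K * R ↔ K * (H * P + R) = P := by
  rw [Matrix.sub_mul, Matrix.one_mul, Matrix.mul_add, Matrix.mul_assoc, sub_eq_iff_eq_add',
    eq_comm]

theorem stmt_6_general [CommRing α] [DecidableEq m] (Q : Matrix n n α) (R : Matrix m m α)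
    (H : Matrix m n α) (G K : Matrix n m α) (hS : IsUnit (H * Q * G + R))
    (hK : K = Q * G * (H * Q * G + R)⁻¹) :
    (1 - K * H) * Q * G = K * R := by
  have gain_mul : K * (H * Q * G + R) = Q * G := by
    rw [hK, nonsing_inv_mul_cancel_right _ _ ((isUnit_iff_isUnit_det _).mp hS)]
  rw [Matrix.mul_assoc, one_sub_mul_mul_eq_mul_iff, ← Matrix.mul_assoc, gain_mul]

end

/-- In the Kalman gain setup (`Q`, `R` symmetric positive
definite, `K = Q Hᵀ (H Q Hᵀ + R)⁻¹`), one has `(I − K H) Q Hᵀ = K R`. -/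
theorem stmt_6 (n m : ℕ) (hn : 0 < n) (hm : 0 < m)
    (Q : Matrix (Fin n) (Fin n) ℝ) (R : Matrix (Fin m) (Fin m) ℝ)
    (H : Matrix (Fin m) (Fin n) ℝ) (K : Matrix (Fin n) (Fin m) ℝ)
    (hQ : Q.PosDef) (hR : R.PosDef)
    (hK : K = Q * Hᵀ * (H * Q * Hᵀ + R)⁻¹) :
    (1 - K * H) * Q * Hᵀ = K * R := by
  have hS := posDef_mul_mul_conjTranspose_add hQ.posSemidef hR H
  rw [conjTranspose_eq_transpose_of_trivial] at hS
  exact stmt_6_general Q R H Hᵀ K hS.isUnit hK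
end

section
/- Let Q, R, H and K be as in the Kalman gain setup. Then (I − K H) Q (I − K H)ᵀ + K R Kᵀ = (I − K H) Q; that is, with B = I − K H and S = (I − K H) Q (K H)ᵀ = K R Kᵀ, the constraint B Q Bᵀ + S = (I − K H) Q is satisfied, so the stochastic ensemble Kalman filter update produces samples with the posterior covariance (I − K H) Q. -/
open Matrix

section KalmanGain

variable {m n α : Type*} [Fintype m] [Fintype n] [DecidableEq n]

theorem one_sub_mul_mul_eq_mul_of_mul_add_eq [Ring α] {Q : Matrix n n α} {R : Matrix m m α}
    {H : Matrix m n α} {G K : Matrix n m α} (hK : K * (H * Q * G + R) = Q * G) :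
    (1 - K * H) * Q * G = K * R :=
  calc
    (1 - K * H) * Q * G = Q * G - K * (H * Q * G) := by
      simp only [Matrix.sub_mul, Matrix.one_mul, Matrix.mul_assoc]
    _ = K * R := by rw [← hK, Matrix.mul_add, add_sub_cancel_left]

variable [CommRing α] {Q : Matrix n n α} {R : Matrix m m α} {H : Matrix m n α} {K : Matrix n m α}

theorem one_sub_mul_mul_mul_transpose_eq (hK : K * (H * Q * Hᵀ + R) = Q * Hᵀ) :
    (1 - K * H) * Q * (K * H)ᵀ = K * R * Kᵀ := by
  rw [transpose_mul, ← Matrix.mul_assoc, one_sub_mul_mul_eq_mul_of_mul_add_eq hK]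

/-- `hK` is the normal equation for the gain: it says that the analysis error is uncorrelated with
the innovation, whose covariance is `H * Q * Hᵀ + R`. -/
theorem stmt_10_general (hK : K * (H * Q * Hᵀ + R) = Q * Hᵀ) :
    (1 - K * H) * Q * (1 - K * H)ᵀ + K * R * Kᵀ = (1 - K * H) * Q :=
  calc
    (1 - K * H) * Q * (1 - K * H)ᵀ + K * R * Kᵀ
        = (1 - K * H) * Q * (1 - K * H)ᵀ + (1 - K * H) * Q * (K * H)ᵀ := by
      rw [one_sub_mul_mul_mul_transpose_eq hK]
    _ = (1 - K * H) * Q * (1 - K * H + K * H)ᵀ := by rw [transpose_add, Matrix.mul_add]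
    _ = (1 - K * H) * Q := by rw [sub_add_cancel, transpose_one, Matrix.mul_one]

end KalmanGain

/-- In the Kalman gain setup,
`(I − K H) Q (I − K H)ᵀ + K R Kᵀ = (I − K H) Q`; i.e. with `B = I − K H` and
`S = K R Kᵀ` the constraint `B Q Bᵀ + S = (I − K H) Q` is satisfied. -/
theorem stmt_10 (n m : ℕ) (hn : 0 < n) (hm : 0 < m)
    (Q : Matrix (Fin n) (Fin n) ℝ) (R : Matrix (Fin m) (Fin m) ℝ)
    (H : Matrix (Fin m) (Fin n) ℝ) (K : Matrix (Fin n) (Fin m) ℝ)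
    (hQ : Q.PosDef) (hR : R.PosDef)
    (hK : K = Q * Hᵀ * (H * Q * Hᵀ + R)⁻¹) :
    (1 - K * H) * Q * (1 - K * H)ᵀ + K * R * Kᵀ = (1 - K * H) * Q := by
  have hS : (H * Q * Hᵀ + R).PosDef :=
    .posSemidef_add (hQ.posSemidef.mul_mul_conjTranspose_same H) hR
  exact stmt_10_general (hK ▸ nonsing_inv_mul_cancel_right _ _ hS.det_pos.ne'.isUnit)
end

section
/- Let Q, R, H and K be as in the Kalman gain setup. Then (I − K H) Q = (Q⁻¹ + Hᵀ R⁻¹ H)⁻¹; in particular, the posterior covariance matrix (I − K H) Q is symmetric and positive definite. -/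
open Matrix

section Woodbury

variable {m n α : Type*} [Fintype m] [DecidableEq m] [Fintype n] [DecidableEq n] [CommRing α]

/-- The Woodbury identity for `A⁻¹ + U * C⁻¹ * V`, with the gain `A * U * (V * A * U + C)⁻¹`
factored out. -/
theorem one_sub_mul_mul_inv_mul_mul_eq_inv {A : Matrix n n α} {C : Matrix m m α}
    (U : Matrix n m α) (V : Matrix m n α) (hA : IsUnit A) (hC : IsUnit C)
    (hS : IsUnit (V * A * U + C)) :
    (1 - A * U * (V * A * U + C)⁻¹ * V) * A = (A⁻¹ + U * C⁻¹ * V)⁻¹ := by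
  have hA_inv_inv : A⁻¹⁻¹ = A := nonsing_inv_nonsing_inv A ((isUnit_iff_isUnit_det A).1 hA)
  have hC_inv_inv : C⁻¹⁻¹ = C := nonsing_inv_nonsing_inv C ((isUnit_iff_isUnit_det C).1 hC)
  have hS' : IsUnit (C⁻¹⁻¹ + V * A⁻¹⁻¹ * U) := by
    rwa [hA_inv_inv, hC_inv_inv, add_comm]
  calc (1 - A * U * (V * A * U + C)⁻¹ * V) * A
      = A - A * U * (C + V * A * U)⁻¹ * V * A := by
        rw [Matrix.sub_mul, Matrix.one_mul, add_comm C]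
    _ = A⁻¹⁻¹ - A⁻¹⁻¹ * U * (C⁻¹⁻¹ + V * A⁻¹⁻¹ * U)⁻¹ * V * A⁻¹⁻¹ := by
        rw [hA_inv_inv, hC_inv_inv]
    _ = (A⁻¹ + U * C⁻¹ * V)⁻¹ :=
        (add_mul_mul_inv_eq_sub A⁻¹ U C⁻¹ V (isUnit_nonsing_inv_iff.2 hA)
          (isUnit_nonsing_inv_iff.2 hC) hS').symm

end Woodbury

theorem stmt_11_general {m n 𝕜 : Type*} [Fintype m] [DecidableEq m] [Fintype n] [DecidableEq n]
    [Field 𝕜] [PartialOrder 𝕜] [StarRing 𝕜] [AddLeftMono 𝕜]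
    {Q : Matrix n n 𝕜} {R : Matrix m m 𝕜} {H : Matrix m n 𝕜} {K : Matrix n m 𝕜}
    (hQ : Q.PosDef) (hR : R.PosDef) (hK : K = Q * Hᴴ * (H * Q * Hᴴ + R)⁻¹) :
    (1 - K * H) * Q = (Q⁻¹ + Hᴴ * R⁻¹ * H)⁻¹ ∧ ((1 - K * H) * Q).PosDef := by
  have innovation_posDef : (H * Q * Hᴴ + R).PosDef :=
    PosDef.posSemidef_add (hQ.posSemidef.mul_mul_conjTranspose_same H) hR
  have information_posDef : (Q⁻¹ + Hᴴ * R⁻¹ * H).PosDef :=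
    hQ.inv.add_posSemidef (hR.inv.posSemidef.conjTranspose_mul_mul_same H)
  have posterior_eq : (1 - K * H) * Q = (Q⁻¹ + Hᴴ * R⁻¹ * H)⁻¹ := by
    rw [hK]
    exact one_sub_mul_mul_inv_mul_mul_eq_inv Hᴴ H hQ.isUnit hR.isUnit innovation_posDef.isUnit
  exact ⟨posterior_eq, posterior_eq ▸ information_posDef.inv⟩

/-- In the Kalman gain setup,
`(I − K H) Q = (Q⁻¹ + Hᵀ R⁻¹ H)⁻¹`; in particular the posterior covariance
matrix `(I − K H) Q` is symmetric and positive definite. -/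
theorem stmt_11 (n m : ℕ) (hn : 0 < n) (hm : 0 < m)
    (Q : Matrix (Fin n) (Fin n) ℝ) (R : Matrix (Fin m) (Fin m) ℝ)
    (H : Matrix (Fin m) (Fin n) ℝ) (K : Matrix (Fin n) (Fin m) ℝ)
    (hQ : Q.PosDef) (hR : R.PosDef)
    (hK : K = Q * Hᵀ * (H * Q * Hᵀ + R)⁻¹) :
    (1 - K * H) * Q = (Q⁻¹ + Hᵀ * R⁻¹ * H)⁻¹ ∧
      ((1 - K * H) * Q).PosDef := by
  rw [← conjTranspose_eq_transpose_of_trivial] at hK ⊢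
  exact stmt_11_general hQ hR hK
end

section
/- Let Q, R, H and K be as in the Kalman gain setup, let A be an invertible n×n real matrix, let Q = V D Vᵀ and (I − K H) Q = U Λ Uᵀ with V, U orthogonal and D, Λ diagonal with strictly positive diagonal entries, let Z = Λ^{1/2} Uᵀ Aᵀ A Q V D^{-1/2} have singular value decomposition Z = P G Fᵀ with P, F orthogonal and G diagonal with strictly positive entries, and set B* = U Λ^{1/2} P Fᵀ D^{-1/2} Vᵀ. Then B* Q (B*)ᵀ = (I − K H) Q (that is, the corresponding noise covariance S = (I − K H) Q − B* Q (B*)ᵀ is zero, a square root filter), and for every n×n real matrix B such that (I − K H) Q − B Q Bᵀ is positive semidefinite, tr(A B Q Aᵀ) ≤ tr(A B* Q Aᵀ); that is, B* maximises the objective c(B) = tr(A B Q Aᵀ) subject to the positive semidefiniteness constraint. -/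
open Matrix

/-!
Write `Q = L Lᴴ` and `S = M Mᴴ` with `L = V D^{1/2}` and `M = U Λ^{1/2}`, where `S` is the
prescribed covariance. In the variable `W = M⁻¹ B L` the constraint `S - B Q Bᴴ ≥ 0` says that
`W` is a contraction, and the objective becomes `tr (W Zᴴ)` with `Z = Mᴴ Aᴴ A L = P G Fᴴ`. This
equals `tr ((Pᴴ W F) G)`, where `Pᴴ W F` is again a contraction. Its entries are bounded by `1`,
so the objective is at most `tr G`, attained when `Pᴴ W F = 1`, that is, at the unitary matrix
`W = P Fᴴ`, which corresponds to `B* = M P Fᴴ L⁻¹`.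
-/

section

open scoped ComplexOrder

variable {𝕜 m n κ : Type*} [RCLike 𝕜]

theorem norm_apply_le_one_of_posSemidef_one_sub [Fintype n] [DecidableEq m] {W : Matrix m n 𝕜}
    (hW : (1 - W * Wᴴ).PosSemidef) (i : m) (j : n) : ‖W i j‖ ≤ 1 := by
  have hrow : ∑ k, ‖W i k‖ ^ 2 ≤ 1 := by
    have hdiag : (1 - W * Wᴴ : Matrix m m 𝕜) i i = ((1 - ∑ k, ‖W i k‖ ^ 2 : ℝ) : 𝕜) := by
      simp [mul_apply, RCLike.mul_conj]
    have hnonneg : 0 ≤ (1 - W * Wᴴ : Matrix m m 𝕜) i i := hW.diag_nonneg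
    rw [hdiag, RCLike.ofReal_nonneg] at hnonneg
    exact sub_nonneg.mp hnonneg
  have hentry : ‖W i j‖ ^ 2 ≤ ∑ k, ‖W i k‖ ^ 2 :=
    Finset.single_le_sum (f := fun k ↦ ‖W i k‖ ^ 2) (fun _ _ ↦ sq_nonneg _) (Finset.mem_univ j)
  exact (sq_le_one_iff₀ (norm_nonneg _)).mp (hentry.trans hrow)

theorem re_trace_mul_diagonal_le_sum [Fintype m] [DecidableEq m] {W : Matrix m m 𝕜}
    (hW : (1 - W * Wᴴ).PosSemidef) {g : m → ℝ} (hg : ∀ i, 0 ≤ g i) :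
    RCLike.re (W * diagonal fun i ↦ (g i : 𝕜)).trace ≤ ∑ i, g i := by
  simp only [trace, diag_apply, mul_diagonal, map_sum, RCLike.re_mul_ofReal]
  refine Finset.sum_le_sum fun i _ ↦ mul_le_of_le_one_left (hg i) ?_
  exact (RCLike.re_le_norm _).trans (norm_apply_le_one_of_posSemidef_one_sub hW i i)

theorem trace_mul_conjTranspose_svd [Fintype m] [Fintype n] [Fintype κ] [DecidableEq κ]
    (W : Matrix m n 𝕜) (P : Matrix m κ 𝕜) (F : Matrix n κ 𝕜) (g : κ → ℝ) :
    (W * (P * diagonal (fun i ↦ (g i : 𝕜)) * Fᴴ)ᴴ).trace =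
      (Pᴴ * W * F * diagonal fun i ↦ (g i : 𝕜)).trace := by
  have hdiag : (diagonal fun i ↦ (g i : 𝕜))ᴴ = diagonal fun i ↦ (g i : 𝕜) := by
    simp [diagonal_conjTranspose, Pi.star_def]
  rw [conjTranspose_mul, conjTranspose_mul, hdiag, conjTranspose_conjTranspose,
    ← Matrix.mul_assoc, ← Matrix.mul_assoc, trace_mul_comm]
  simp only [Matrix.mul_assoc]

theorem re_trace_mul_conjTranspose_svd_le_sum [Fintype m] [Fintype n] [Fintype κ] [DecidableEq m]
    [DecidableEq n] [DecidableEq κ] {W : Matrix m n 𝕜} (hW : (1 - W * Wᴴ).PosSemidef)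
    {P : Matrix m κ 𝕜} {F : Matrix n κ 𝕜} (hP : Pᴴ * P = 1) (hF : F * Fᴴ = 1)
    {g : κ → ℝ} (hg : ∀ i, 0 ≤ g i) :
    RCLike.re (W * (P * diagonal (fun i ↦ (g i : 𝕜)) * Fᴴ)ᴴ).trace ≤ ∑ i, g i := by
  have hcontr : (1 - (Pᴴ * W * F) * (Pᴴ * W * F)ᴴ).PosSemidef := by
    convert hW.conjTranspose_mul_mul_same P using 1
    calc 1 - (Pᴴ * W * F) * (Pᴴ * W * F)ᴴ = Pᴴ * P - Pᴴ * (W * (F * Fᴴ) * Wᴴ) * P := by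
          simp only [hP, conjTranspose_mul, conjTranspose_conjTranspose, Matrix.mul_assoc]
      _ = Pᴴ * (1 - W * Wᴴ) * P := by
          rw [hF, Matrix.mul_one, Matrix.mul_sub, Matrix.sub_mul, Matrix.mul_one]
  rw [trace_mul_conjTranspose_svd]
  exact re_trace_mul_diagonal_le_sum hcontr hg

theorem re_trace_isometries_mul_conjTranspose_svd [Fintype m] [Fintype n] [Fintype κ]
    [DecidableEq κ] {P : Matrix m κ 𝕜} {F : Matrix n κ 𝕜} (hP : Pᴴ * P = 1) (hF : Fᴴ * F = 1)
    (g : κ → ℝ) :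
    RCLike.re (P * Fᴴ * (P * diagonal (fun i ↦ (g i : 𝕜)) * Fᴴ)ᴴ).trace = ∑ i, g i := by
  have hone : Pᴴ * (P * Fᴴ) * F = 1 := by
    rw [← Matrix.mul_assoc, hP, Matrix.one_mul, hF]
  rw [trace_mul_conjTranspose_svd, hone]
  simp [trace_diagonal]

variable [Fintype n] [DecidableEq n]

theorem posSemidef_one_sub_of_posSemidef_sub [Fintype m] [Fintype κ] {M : Matrix n n 𝕜}
    {B : Matrix n m 𝕜} {L : Matrix m κ 𝕜} (hM : IsUnit M.det)
    (hB : (M * Mᴴ - B * (L * Lᴴ) * Bᴴ).PosSemidef) :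
    (1 - (M⁻¹ * B * L) * (M⁻¹ * B * L)ᴴ).PosSemidef := by
  convert hB.mul_mul_conjTranspose_same M⁻¹ using 1
  have hMM : M⁻¹ * (M * Mᴴ) * M⁻¹ᴴ = 1 := by
    rw [nonsing_inv_mul_cancel_left _ _ hM, ← conjTranspose_mul, nonsing_inv_mul _ hM,
      conjTranspose_one]
  rw [Matrix.mul_sub, Matrix.sub_mul, hMM]
  simp only [conjTranspose_mul, Matrix.mul_assoc]

theorem trace_factor_eq_trace_inv_mul_mul_conjTranspose [Fintype m] [Fintype κ] {M : Matrix n n 𝕜}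
    (hM : IsUnit M.det) (A : Matrix m n 𝕜) (B : Matrix n n 𝕜) (L : Matrix n κ 𝕜) :
    (A * B * (L * Lᴴ) * Aᴴ).trace = ((M⁻¹ * B * L) * (Mᴴ * Aᴴ * A * L)ᴴ).trace := by
  calc (A * B * (L * Lᴴ) * Aᴴ).trace = (A * (M * (M⁻¹ * B * L * Lᴴ * Aᴴ))).trace := by
        simp only [Matrix.mul_assoc, mul_nonsing_inv_cancel_left _ _ hM]
    _ = (M⁻¹ * B * L * Lᴴ * Aᴴ * (A * M)).trace := by
        rw [← Matrix.mul_assoc A M, trace_mul_comm]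
    _ = ((M⁻¹ * B * L) * (Mᴴ * Aᴴ * A * L)ᴴ).trace := by
        simp only [conjTranspose_mul, conjTranspose_conjTranspose, Matrix.mul_assoc]

theorem mul_mul_inv_mul_factor_mul_conjTranspose [Fintype κ] [DecidableEq κ] {M : Matrix m κ 𝕜}
    {W : Matrix κ n 𝕜} {L : Matrix n n 𝕜} (hL : IsUnit L.det) (hW : W * Wᴴ = 1) :
    (M * W * L⁻¹) * (L * Lᴴ) * (M * W * L⁻¹)ᴴ = M * Mᴴ := by
  have hcancel : M * W * L⁻¹ * L = M * W := nonsing_inv_mul_cancel_right _ _ hL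
  calc (M * W * L⁻¹) * (L * Lᴴ) * (M * W * L⁻¹)ᴴ
      = (M * W * L⁻¹ * L) * (M * W * L⁻¹ * L)ᴴ := by
        simp only [conjTranspose_mul, Matrix.mul_assoc]
    _ = M * (W * Wᴴ) * Mᴴ := by
        rw [hcancel, conjTranspose_mul]
        simp only [Matrix.mul_assoc]
    _ = M * Mᴴ := by rw [hW, Matrix.mul_one]

theorem re_trace_le_of_posSemidef_sub [Fintype m] {M L P F : Matrix n n 𝕜} {A : Matrix m n 𝕜}
    {g : n → ℝ} (hM : IsUnit M.det) (hL : IsUnit L.det) (hP : Pᴴ * P = 1) (hF : Fᴴ * F = 1)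
    (hg : ∀ i, 0 ≤ g i) (hsvd : Mᴴ * Aᴴ * A * L = P * diagonal (fun i ↦ (g i : 𝕜)) * Fᴴ)
    {B : Matrix n n 𝕜} (hB : (M * Mᴴ - B * (L * Lᴴ) * Bᴴ).PosSemidef) :
    RCLike.re (A * B * (L * Lᴴ) * Aᴴ).trace ≤
      RCLike.re (A * (M * (P * Fᴴ) * L⁻¹) * (L * Lᴴ) * Aᴴ).trace := by
  have hopt : M⁻¹ * (M * (P * Fᴴ) * L⁻¹) * L = P * Fᴴ := by
    rw [Matrix.mul_assoc M, nonsing_inv_mul_cancel_left _ _ hM,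
      nonsing_inv_mul_cancel_right _ _ hL]
  rw [trace_factor_eq_trace_inv_mul_mul_conjTranspose hM A B,
    trace_factor_eq_trace_inv_mul_mul_conjTranspose hM A (M * _ * _), hopt, hsvd,
    re_trace_isometries_mul_conjTranspose_svd hP hF]
  exact re_trace_mul_conjTranspose_svd_le_sum (posSemidef_one_sub_of_posSemidef_sub hM hB) hP
    (mul_eq_one_comm.mp hF) hg

/-- The factor `L = V D^{1/2}` of a spectral decomposition `V D Vᴴ`, used to write it as `L Lᴴ`.
The matrix `D` is given by its diagonal `d`; since `√` is `0` at negative reals, `V D Vᴴ = L Lᴴ`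
requires `0 ≤ d`. -/
noncomputable def spectralFactor (V : Matrix m n 𝕜) (d : n → ℝ) : Matrix m n 𝕜 :=
  V * diagonal fun i ↦ (√(d i) : 𝕜)

theorem conjTranspose_spectralFactor (V : Matrix m n 𝕜) (d : n → ℝ) :
    (spectralFactor V d)ᴴ = (diagonal fun i ↦ (√(d i) : 𝕜)) * Vᴴ := by
  simp [spectralFactor, diagonal_conjTranspose, Pi.star_def]

theorem spectralFactor_mul_conjTranspose (V : Matrix m n 𝕜) {d : n → ℝ} (hd : ∀ i, 0 ≤ d i) :
    spectralFactor V d * (spectralFactor V d)ᴴ = V * diagonal (fun i ↦ (d i : 𝕜)) * Vᴴ := by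
  have hsqrt (i : n) : (√(d i) : 𝕜) * (√(d i) : 𝕜) = (d i : 𝕜) := by
    rw [← RCLike.ofReal_mul, Real.mul_self_sqrt (hd i)]
  rw [conjTranspose_spectralFactor, spectralFactor, Matrix.mul_assoc,
    ← Matrix.mul_assoc (diagonal _), diagonal_mul_diagonal, ← Matrix.mul_assoc]
  simp only [hsqrt]

theorem diagonal_inv_sqrt_mul_conjTranspose_mul_spectralFactor [Fintype m] {V : Matrix m n 𝕜}
    (hV : Vᴴ * V = 1) {d : n → ℝ} (hd : ∀ i, 0 < d i) :
    (diagonal fun i ↦ (((√(d i))⁻¹ : ℝ) : 𝕜)) * Vᴴ * spectralFactor V d = 1 := by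
  have hsqrt (i : n) : (((√(d i))⁻¹ : ℝ) : 𝕜) * (√(d i) : 𝕜) = 1 := by
    rw [← RCLike.ofReal_mul, inv_mul_cancel₀ (Real.sqrt_pos.mpr (hd i)).ne', RCLike.ofReal_one]
  rw [spectralFactor, Matrix.mul_assoc, ← Matrix.mul_assoc Vᴴ, hV, Matrix.one_mul,
    diagonal_mul_diagonal]
  simp only [hsqrt, diagonal_one]

theorem isUnit_det_spectralFactor {V : Matrix n n 𝕜} (hV : Vᴴ * V = 1) {d : n → ℝ}
    (hd : ∀ i, 0 < d i) : IsUnit (spectralFactor V d).det :=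
  isUnit_det_of_left_inverse (diagonal_inv_sqrt_mul_conjTranspose_mul_spectralFactor hV hd)

theorem inv_spectralFactor {V : Matrix n n 𝕜} (hV : Vᴴ * V = 1) {d : n → ℝ}
    (hd : ∀ i, 0 < d i) :
    (spectralFactor V d)⁻¹ = (diagonal fun i ↦ (((√(d i))⁻¹ : ℝ) : 𝕜)) * Vᴴ :=
  inv_eq_left_inv (diagonal_inv_sqrt_mul_conjTranspose_mul_spectralFactor hV hd)

theorem spectral_mul_mul_diagonal_inv_sqrt_eq_spectralFactor [Fintype m] {V : Matrix m n 𝕜}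
    (hV : Vᴴ * V = 1) (d : n → ℝ) :
    V * diagonal (fun i ↦ (d i : 𝕜)) * Vᴴ * V * diagonal (fun i ↦ (((√(d i))⁻¹ : ℝ) : 𝕜)) =
      spectralFactor V d := by
  have hsqrt (i : n) : (d i : 𝕜) * (((√(d i))⁻¹ : ℝ) : 𝕜) = (√(d i) : 𝕜) := by
    rw [← RCLike.ofReal_mul, ← div_eq_mul_inv, Real.div_sqrt]
  rw [Matrix.mul_assoc _ Vᴴ, hV, Matrix.mul_one, Matrix.mul_assoc, diagonal_mul_diagonal,
    spectralFactor]
  simp only [hsqrt]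

theorem stmt_17_general [Fintype m] {Q S V U P F Bstar : Matrix n n 𝕜} (A : Matrix m n 𝕜)
    (hV : Vᴴ * V = 1) (hU : Uᴴ * U = 1) (hP : Pᴴ * P = 1) (hF : Fᴴ * F = 1)
    {d l g : n → ℝ} (hd : ∀ i, 0 < d i) (hl : ∀ i, 0 < l i) (hg : ∀ i, 0 ≤ g i)
    (hQdec : Q = V * diagonal (fun i ↦ (d i : 𝕜)) * Vᴴ)
    (hSdec : S = U * diagonal (fun i ↦ (l i : 𝕜)) * Uᴴ)
    (hSVD : diagonal (fun i ↦ (√(l i) : 𝕜)) * Uᴴ * Aᴴ * A * Q * V *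
        diagonal (fun i ↦ (((√(d i))⁻¹ : ℝ) : 𝕜)) =
      P * diagonal (fun i ↦ (g i : 𝕜)) * Fᴴ)
    (hBstar : Bstar = U * diagonal (fun i ↦ (√(l i) : 𝕜)) * P * Fᴴ *
      diagonal (fun i ↦ (((√(d i))⁻¹ : ℝ) : 𝕜)) * Vᴴ) :
    Bstar * Q * Bstarᴴ = S ∧
      ∀ B : Matrix n n 𝕜, (S - B * Q * Bᴴ).PosSemidef →
        RCLike.re (A * B * Q * Aᴴ).trace ≤ RCLike.re (A * Bstar * Q * Aᴴ).trace := by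
  have hLdet := isUnit_det_spectralFactor hV hd
  have hMdet := isUnit_det_spectralFactor hU hl
  have hsvd : (spectralFactor U l)ᴴ * Aᴴ * A * spectralFactor V d =
      P * diagonal (fun i ↦ (g i : 𝕜)) * Fᴴ := by
    rw [← hSVD, hQdec, conjTranspose_spectralFactor,
      ← spectral_mul_mul_diagonal_inv_sqrt_eq_spectralFactor hV d]
    simp only [Matrix.mul_assoc]
  have hBfactor : Bstar = spectralFactor U l * (P * Fᴴ) * (spectralFactor V d)⁻¹ := by
    rw [hBstar, inv_spectralFactor hV hd, spectralFactor]
    simp only [Matrix.mul_assoc]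
  have hunitary : (P * Fᴴ) * (P * Fᴴ)ᴴ = 1 := by
    rw [conjTranspose_mul, conjTranspose_conjTranspose, Matrix.mul_assoc, ← Matrix.mul_assoc Fᴴ,
      hF, Matrix.one_mul, mul_eq_one_comm.mp hP]
  rw [hBfactor, hQdec, hSdec, ← spectralFactor_mul_conjTranspose V fun i ↦ (hd i).le,
    ← spectralFactor_mul_conjTranspose U fun i ↦ (hl i).le]
  exact ⟨mul_mul_inv_mul_factor_mul_conjTranspose hLdet hunitary,
    fun _ ↦ re_trace_le_of_posSemidef_sub hMdet hLdet hP hF hg hsvd⟩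

end

/-- In the Kalman gain setup, with `A` invertible,
`Q = V D Vᵀ`, `(I − K H) Q = U Λ Uᵀ`, `Z = Λ^{1/2} Uᵀ Aᵀ A Q V D^{-1/2}` with
singular value decomposition `Z = P G Fᵀ`, and
`B* = U Λ^{1/2} P Fᵀ D^{-1/2} Vᵀ`: then `B* Q (B*)ᵀ = (I − K H) Q` (the noise
covariance is zero, a square root filter), and for every matrix `B` such that
`(I − K H) Q − B Q Bᵀ` is positive semidefinite,
`tr(A B Q Aᵀ) ≤ tr(A B* Q Aᵀ)`. -/
theorem stmt_17 (n m : ℕ) (hn : 0 < n) (hm : 0 < m)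
    (Q : Matrix (Fin n) (Fin n) ℝ) (R : Matrix (Fin m) (Fin m) ℝ)
    (H : Matrix (Fin m) (Fin n) ℝ) (K : Matrix (Fin n) (Fin m) ℝ)
    (hQ : Q.PosDef) (hR : R.PosDef)
    (hK : K = Q * Hᵀ * (H * Q * Hᵀ + R)⁻¹)
    (A : Matrix (Fin n) (Fin n) ℝ) (hA : IsUnit A)
    (V U P F : Matrix (Fin n) (Fin n) ℝ)
    (hV : Vᵀ * V = 1) (hU : Uᵀ * U = 1) (hP : Pᵀ * P = 1) (hF : Fᵀ * F = 1)
    (d l g : Fin n → ℝ) (hd : ∀ i, 0 < d i) (hl : ∀ i, 0 < l i)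
    (hg : ∀ i, 0 < g i)
    (hQdec : Q = V * Matrix.diagonal d * Vᵀ)
    (hPdec : (1 - K * H) * Q = U * Matrix.diagonal l * Uᵀ)
    (hSVD : Matrix.diagonal (fun i => Real.sqrt (l i)) * Uᵀ * Aᵀ * A * Q * V *
        Matrix.diagonal (fun i => (Real.sqrt (d i))⁻¹) =
      P * Matrix.diagonal g * Fᵀ)
    (Bstar : Matrix (Fin n) (Fin n) ℝ)
    (hBstar : Bstar = U * Matrix.diagonal (fun i => Real.sqrt (l i)) * P * Fᵀ *
      Matrix.diagonal (fun i => (Real.sqrt (d i))⁻¹) * Vᵀ) :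
    Bstar * Q * Bstarᵀ = (1 - K * H) * Q ∧
      ∀ B : Matrix (Fin n) (Fin n) ℝ,
        ((1 - K * H) * Q - B * Q * Bᵀ).PosSemidef →
          (A * B * Q * Aᵀ).trace ≤ (A * Bstar * Q * Aᵀ).trace := by
  -- Over `ℝ`, `ᴴ` and `ᵀ` agree definitionally, and `re` and the coercion `ℝ → 𝕜` are the identity.
  exact stmt_17_general A hV hU hP hF hd hl (fun i ↦ (hg i).le) hQdec hPdec hSVD hBstar
end
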